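/- Fix an integer p ≥ 2 and 0 ≤ α ≤ p−1. Then the level set E(α) = {x ∈ [0,1] : lim_{n→∞} S_n(x)/n exists and equals α} has Hausdorff dimension h(α). -/

import Mathlib

open Filter MeasureTheory Set
open scoped ENNReal

noncomputable section

/-- Number of words of length `n` over the alphabet `{0, …, p-1}` whose digit sum lies
strictly between `n(α-δ)` and `n(α+δ)`; this is `h(α,n,δ)`. -/
def hcount (p n : ℕ) (α δ : ℝ) : ℕ :=
  Nat.card {w : Fin n → Fin p //
    (n : ℝ) * (α - δ) < ∑ i, ((w i : ℕ) : ℝ) ∧ (∑ i, ((w i : ℕ) : ℝ)) < n * (α + δ)}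

/-- The `p`-adic entropy function
`h(α) = lim_{δ→0} limsup_{n→∞} log h(α,n,δ) / (n log p)`.
Since the inner quantity is nondecreasing in `δ`, the limit as `δ → 0⁺` equals the
infimum over `δ > 0`. -/
def entropy (p : ℕ) (α : ℝ) : ℝ :=
  ⨅ δ : {δ : ℝ // 0 < δ},
    limsup (fun n : ℕ => Real.log (hcount p n α δ) / (n * Real.log p)) atTop

/-- Number of words of length `n` over `{0, …, p-1}` with digit sum `< n(α+δ)`;
this is `h̄(α,n,δ)`. -/
def hbarCount (p n : ℕ) (α δ : ℝ) : ℕ :=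
  Nat.card {w : Fin n → Fin p // (∑ i, ((w i : ℕ) : ℝ)) < n * (α + δ)}

/-- The `p`-adic upper entropy function
`h̄(α) = lim_{δ→0} limsup_{n→∞} log h̄(α,n,δ) / (n log p)`, the limit in `δ`
being the infimum over `δ > 0` by monotonicity in `δ`. -/
def upperEntropy (p : ℕ) (α : ℝ) : ℝ :=
  ⨅ δ : {δ : ℝ // 0 < δ},
    limsup (fun n : ℕ => Real.log (hbarCount p n α δ) / (n * Real.log p)) atTop

/-- Number of words of length `n` over `{0, …, p-1}` with digit sum `> n(α-δ)`;
this is `h̲(α,n,δ)`. -/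
def hlowCount (p n : ℕ) (α δ : ℝ) : ℕ :=
  Nat.card {w : Fin n → Fin p // (n : ℝ) * (α - δ) < ∑ i, ((w i : ℕ) : ℝ)}

/-- The `p`-adic lower entropy function
`h̲(α) = lim_{δ→0} liminf_{n→∞} log h̲(α,n,δ) / (n log p)`, the limit in `δ`
being the infimum over `δ > 0` by monotonicity in `δ`. -/
def lowerEntropy (p : ℕ) (α : ℝ) : ℝ :=
  ⨅ δ : {δ : ℝ // 0 < δ},
    liminf (fun n : ℕ => Real.log (hlowCount p n α δ) / (n * Real.log p)) atTop

/-- The `(n+1)`-th digit `x_{n+1} ∈ {0,…,p-1}` of the non-terminating `p`-adic expansion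
`x = 0.x₁x₂x₃…` of `x ∈ [0,1]` (the expansion not ending in all zeros). -/
def padicDigit (p : ℕ) (x : ℝ) (n : ℕ) : ℤ :=
  (⌈x * p ^ (n + 1)⌉ - 1) - p * (⌈x * p ^ n⌉ - 1)

/-- `S_n(T^m x) = x_{m+1} + ⋯ + x_{m+n}`, the digit sum of length `n` after shifting
`m` times. In particular `msum p x 0 n = S_n(x)`. -/
def msum (p : ℕ) (x : ℝ) (m n : ℕ) : ℤ :=
  ∑ i ∈ Finset.range n, padicDigit p x (m + i)

/-- The `n`-th lower moving digit mean `M̲ₙ(x) = liminf_{m→∞} S_n(T^m x)/n`. -/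
def lowerMn (p : ℕ) (x : ℝ) (n : ℕ) : ℝ :=
  liminf (fun m : ℕ => (msum p x m n : ℝ) / n) atTop

/-- The `n`-th upper moving digit mean `M̄ₙ(x) = limsup_{m→∞} S_n(T^m x)/n`. -/
def upperMn (p : ℕ) (x : ℝ) (n : ℕ) : ℝ :=
  limsup (fun m : ℕ => (msum p x m n : ℝ) / n) atTop

/-- The lower moving digit mean `M̲(x) = lim_{n→∞} M̲ₙ(x)`; the limit exists by
subadditivity, hence equals the `liminf`. -/
def lowerM (p : ℕ) (x : ℝ) : ℝ := liminf (fun n : ℕ => lowerMn p x n) atTop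

/-- The upper moving digit mean `M̄(x) = lim_{n→∞} M̄ₙ(x)`; the limit exists by
subadditivity, hence equals the `limsup`. -/
def upperM (p : ℕ) (x : ℝ) : ℝ := limsup (fun n : ℕ => upperMn p x n) atTop

/-- The lower digit mean `A̲(x) = liminf_{n→∞} S_n(x)/n`. -/
def lowerA (p : ℕ) (x : ℝ) : ℝ := liminf (fun n : ℕ => (msum p x 0 n : ℝ) / n) atTop

/-- The upper digit mean `Ā(x) = limsup_{n→∞} S_n(x)/n`. -/
def upperA (p : ℕ) (x : ℝ) : ℝ := limsup (fun n : ℕ => (msum p x 0 n : ℝ) / n) atTop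

/-- The Banach set `B(α,β) = {x ∈ [0,1] : M̲(x) = α, M̄(x) = β}`. -/
def BanachSet (p : ℕ) (α β : ℝ) : Set ℝ :=
  {x | x ∈ Icc (0 : ℝ) 1 ∧ lowerM p x = α ∧ upperM p x = β}

/-- The level set `E(α) = {x ∈ [0,1] : lim_{n→∞} S_n(x)/n = α}` of the arithmetic digit
mean. -/
def digitMeanLevelSet (p : ℕ) (α : ℝ) : Set ℝ :=
  {x | x ∈ Icc (0 : ℝ) 1 ∧
    Tendsto (fun n : ℕ => (msum p x 0 n : ℝ) / n) atTop (nhds α)}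

/-!
Upper bound: off `0`, the points of the level set whose averages stay within `δ` of `α` from some
time `N` on are covered, for each `n ≥ N`, by the `h(α, n, δ)` cylinders of size `p⁻ⁿ` whose words
have mean within `δ` of `α`; hence their dimension is at most the growth rate of `h(α, n, δ)`.

Lower bound: let `Λ(t) = log ∑ⱼ exp (t (j - α))`. Chernoff's bound gives `h(α) ≤ Λ(t) / log p` for
every `t`. When `0 < α < p - 1`, `Λ` has a critical point `t`. There, under independent digits
weighted by `exp (t j)`, the strong law makes almost every sequence have mean `α`, and along such
sequences cylinders of length `n` have mass `exp (-n Λ(t) + o(n))`. By Billingsley's lemma the level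
set has dimension at least `Λ(t) / log p`, which closes the chain
`Λ(t) / log p ≤ dim E(α) ≤ h(α) ≤ Λ(t) / log p`. At an endpoint, `Λ` tends to `0` at `-∞` (`α = 0`)
or at `+∞` (`α = p - 1`), so that `h(α) = 0`.
-/

section HausdorffDimension

open scoped NNReal Topology

section EMetricSpace

variable {X : Type*} [EMetricSpace X] [MeasurableSpace X] [BorelSpace X] {s : Set X}

theorem le_dimH_of_measure_le_ediam_rpow {μ : Measure X} (hs : μ s ≠ 0) {d : ℝ≥0}
    {C r : ℝ≥0∞} (hC : C ≠ ⊤) (hr : 0 < r)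
    (h : ∀ U : Set X, Metric.ediam U ≤ r → μ U ≤ C * Metric.ediam U ^ (d : ℝ)) :
    d ≤ dimH s := by
  have hle : C⁻¹ • μ ≤ μH[(d : ℝ)] := by
    refine Measure.le_hausdorffMeasure _ _ r hr fun U hU => ?_
    rw [Measure.smul_apply, smul_eq_mul, mul_comm, ← div_eq_mul_inv]
    exact ENNReal.div_le_of_le_mul' (h U hU)
  refine le_dimH_of_hausdorffMeasure_ne_zero (ne_bot_of_le_ne_bot ?_ (hle s))
  exact mul_ne_zero (ENNReal.inv_ne_zero.2 hC) hs

section Covering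

variable {ι : ℕ → Type*} [∀ n, Finite (ι n)] {U : ∀ n, ι n → Set X} {b : ℝ}

lemma hausdorffMeasure_eq_zero_of_natCard_le (hb : 1 < b)
    (hdiam : ∀ n i, Metric.ediam (U n i) ≤ ENNReal.ofReal (b ^ n)⁻¹)
    (hcover : ∀ᶠ n in atTop, s ⊆ ⋃ i, U n i) {t d : ℝ}
    (hcard : ∀ᶠ n in atTop, (Nat.card (ι n) : ℝ) ≤ (b ^ t) ^ n) (hd : 0 ≤ d) (htd : t < d) :
    μH[d] s = 0 := by
  have := fun n => Fintype.ofFinite (ι n)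
  have hb0 : 0 < b := one_pos.trans hb
  have hradius : Tendsto (fun n : ℕ => ENNReal.ofReal (b ^ n)⁻¹) atTop (𝓝 0) := by
    simpa using ENNReal.tendsto_ofReal
      (tendsto_inv_atTop_zero.comp (tendsto_pow_atTop_atTop_of_one_lt hb))
  have hdecay : Tendsto (fun n : ℕ => ENNReal.ofReal ((b ^ (t - d)) ^ n)) atTop (𝓝 0) := by
    simpa using ENNReal.tendsto_ofReal (tendsto_pow_atTop_nhds_zero_of_lt_one (by positivity)
      (Real.rpow_lt_one_of_one_lt_of_neg hb (sub_neg.2 htd)))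
  have hsum : ∀ᶠ n in atTop,
      ∑ i, Metric.ediam (U n i) ^ d ≤ ENNReal.ofReal ((b ^ (t - d)) ^ n) := by
    filter_upwards [hcard] with n hn
    calc ∑ i, Metric.ediam (U n i) ^ d
        ≤ ∑ _i : ι n, ENNReal.ofReal (b ^ n)⁻¹ ^ d := by gcongr with i; exact hdiam n i
      _ = ENNReal.ofReal (Nat.card (ι n) * ((b ^ n)⁻¹) ^ d) := by
          rw [Finset.sum_const, nsmul_eq_mul, Finset.card_univ, ← Nat.card_eq_fintype_card,
            ENNReal.ofReal_mul (Nat.cast_nonneg _), ENNReal.ofReal_natCast,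
            ENNReal.ofReal_rpow_of_pos (by positivity)]
      _ ≤ ENNReal.ofReal ((b ^ t) ^ n * ((b ^ n)⁻¹) ^ d) := by gcongr
      _ = ENNReal.ofReal ((b ^ (t - d)) ^ n) := by
          rw [Real.rpow_sub hb0, div_pow, Real.inv_rpow (by positivity),
            ← Real.rpow_pow_comm hb0.le, div_eq_mul_inv]
  refine le_antisymm ?_ bot_le
  calc μH[d] s ≤ liminf (fun n => ∑ i, Metric.ediam (U n i) ^ d) atTop :=
        Measure.hausdorffMeasure_le_liminf_sum d s _ hradius U (.of_forall hdiam) hcover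
    _ ≤ liminf (fun n : ℕ => ENNReal.ofReal ((b ^ (t - d)) ^ n)) atTop := liminf_le_liminf hsum
    _ = 0 := hdecay.liminf_eq

theorem dimH_le_limsup_log_natCard_div (hb : 1 < b)
    (hdiam : ∀ n i, Metric.ediam (U n i) ≤ ENNReal.ofReal (b ^ n)⁻¹)
    (hcover : ∀ᶠ n in atTop, s ⊆ ⋃ i, U n i)
    (hbdd : IsBoundedUnder (· ≤ ·) atTop
      fun n : ℕ => Real.log (Nat.card (ι n)) / (n * Real.log b)) :
    dimH s ≤ ENNReal.ofReal
      (limsup (fun n : ℕ => Real.log (Nat.card (ι n)) / (n * Real.log b)) atTop) := by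
  refine dimH_le fun d hd => ?_
  by_contra! hlt
  obtain ⟨t, ht, htd⟩ := exists_between
    ((ENNReal.ofReal_lt_ofReal_iff'.1 (hlt.trans_eq ENNReal.ofReal_coe_nnreal.symm)).1)
  have hcard : ∀ᶠ n in atTop, (Nat.card (ι n) : ℝ) ≤ (b ^ t) ^ n := by
    filter_upwards [eventually_lt_of_limsup_lt ht hbdd, eventually_gt_atTop 0] with n hn hn0
    have hb0 : 0 < b := one_pos.trans hb
    have hlog := Real.log_pos hb
    rcases (Nat.card (ι n)).eq_zero_or_pos with h0 | hpos
    · rw [h0, Nat.cast_zero]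
      positivity
    rw [div_lt_iff₀ (by positivity)] at hn
    rw [← Real.log_le_log_iff (by exact_mod_cast hpos) (by positivity), Real.log_pow,
      Real.log_rpow hb0]
    linarith
  simp [hausdorffMeasure_eq_zero_of_natCard_le hb hdiam hcover hcard d.coe_nonneg htd] at hd

end Covering

end EMetricSpace

/-- The interval `((k - 1) / b ^ n, k / b ^ n]` with `k : ℤ` that contains `x`. It is open on the
left because non-terminating expansions single out the intervals closed on the right. -/
def adicCell (b : ℝ) (n : ℕ) (x : ℝ) : Set ℝ := {y | ⌈y * b ^ n⌉ = ⌈x * b ^ n⌉}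

section adicCell

variable {b x y : ℝ} {n : ℕ}

lemma mem_adicCell : y ∈ adicCell b n x ↔ ⌈y * b ^ n⌉ = ⌈x * b ^ n⌉ := Iff.rfl

lemma adicCell_eq_of_mem (h : y ∈ adicCell b n x) : adicCell b n y = adicCell b n x :=
  Set.ext fun _ => Eq.congr_right h

lemma measurableSet_adicCell (b : ℝ) (n : ℕ) (x : ℝ) : MeasurableSet (adicCell b n x) :=
  (Int.measurable_ceil.comp (measurable_mul_const _)) (measurableSet_singleton _)

lemma dist_le_of_mem_adicCell (hb : 0 < b) (h : y ∈ adicCell b n x) :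
    dist y x ≤ (b ^ n)⁻¹ := by
  have hbn : 0 < b ^ n := pow_pos hb n
  have hceil : (⌈y * b ^ n⌉ : ℝ) = ⌈x * b ^ n⌉ := congrArg _ (mem_adicCell.1 h)
  rw [Real.dist_eq, inv_eq_one_div, le_div_iff₀ hbn, ← abs_of_pos hbn, ← abs_mul, sub_mul,
    abs_le]
  constructor <;> linarith [Int.le_ceil (x * b ^ n), Int.ceil_lt_add_one (x * b ^ n),
    Int.le_ceil (y * b ^ n), Int.ceil_lt_add_one (y * b ^ n)]

lemma mem_adicCell_union_of_dist_le (hb : 0 < b) (h : dist y x ≤ (b ^ n)⁻¹) :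
    y ∈ adicCell b n (x - (b ^ n)⁻¹) ∪ adicCell b n x ∪ adicCell b n (x + (b ^ n)⁻¹) := by
  have hbn : 0 < b ^ n := pow_pos hb n
  rw [Real.dist_eq, inv_eq_one_div, le_div_iff₀ hbn, ← abs_of_pos hbn, ← abs_mul, sub_mul,
    abs_le] at h
  have hlower : ⌈x * b ^ n⌉ ≤ ⌈y * b ^ n⌉ + 1 := by
    rw [← Int.ceil_add_one]
    exact Int.ceil_le_ceil (by linarith)
  have hupper : ⌈y * b ^ n⌉ ≤ ⌈x * b ^ n⌉ + 1 := by
    rw [← Int.ceil_add_one]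
    exact Int.ceil_le_ceil (by linarith)
  simp only [mem_adicCell, mem_union, sub_mul, add_mul, inv_mul_cancel₀ hbn.ne',
    Int.ceil_sub_one, Int.ceil_add_one]
  omega

variable {ν : Measure ℝ} {U : Set ℝ}

lemma measure_le_three_mul_of_adicCell_le (hb : 0 < b) {M : ℝ≥0∞}
    (hcell : ∀ x, ν (adicCell b n x) ≤ M)
    (hU : Metric.ediam U ≤ ENNReal.ofReal (b ^ n)⁻¹) : ν U ≤ 3 * M := by
  rcases U.eq_empty_or_nonempty with rfl | ⟨x, hx⟩
  · simp
  have hsub : U ⊆ adicCell b n (x - (b ^ n)⁻¹) ∪ adicCell b n x ∪ adicCell b n (x + (b ^ n)⁻¹) :=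
    fun y hy => mem_adicCell_union_of_dist_le hb <|
      (edist_le_ofReal (by positivity)).1 ((Metric.edist_le_ediam_of_mem hy hx).trans hU)
  calc ν U ≤ ν (adicCell b n (x - (b ^ n)⁻¹)) + ν (adicCell b n x)
        + ν (adicCell b n (x + (b ^ n)⁻¹)) :=
      (measure_mono hsub).trans ((measure_union_le _ _).trans
        (add_le_add_left (measure_union_le _ _) _))
    _ ≤ M + M + M := by gcongr <;> exact hcell _
    _ = 3 * M := by ring

lemma measure_le_ediam_rpow_of_adicCell_le (hb : 1 < b) {K : ℝ≥0∞} (hK : K ≠ ⊤) {t : ℝ}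
    (ht : 0 < t)
    (hcell : ∀ n x, ν (adicCell b n x) ≤ K * ENNReal.ofReal (b ^ n)⁻¹ ^ t)
    (hU : Metric.ediam U ≤ 1) :
    ν U ≤ 3 * K * ENNReal.ofReal b ^ t * Metric.ediam U ^ t := by
  have hb0 : 0 < b := one_pos.trans hb
  have hscale : ∀ n : ℕ, Metric.ediam U ≤ ENNReal.ofReal (b ^ n)⁻¹ →
      ν U ≤ 3 * K * ENNReal.ofReal (b ^ n)⁻¹ ^ t := fun n hn =>
    (measure_le_three_mul_of_adicCell_le hb0 (hcell n) hn).trans_eq (mul_assoc _ _ _).symm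
  rcases eq_or_ne (Metric.ediam U) 0 with hzero | hne
  · have hlim : Tendsto (fun n : ℕ => 3 * K * ENNReal.ofReal (b ^ n)⁻¹ ^ t) atTop
        (𝓝 (3 * K * 0 ^ t)) := by
      refine ENNReal.Tendsto.const_mul (Tendsto.ennrpow_const t ?_)
        (Or.inr (ENNReal.mul_ne_top ENNReal.ofNat_ne_top hK))
      simpa using ENNReal.tendsto_ofReal
        (tendsto_inv_atTop_zero.comp (tendsto_pow_atTop_atTop_of_one_lt hb))
    rw [ENNReal.zero_rpow_of_pos ht, mul_zero] at hlim
    exact (ge_of_tendsto' hlim fun n => hscale n (hzero.trans_le bot_le)).trans bot_le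
  · have hfin : Metric.ediam U ≠ ⊤ := (hU.trans_lt ENNReal.one_lt_top).ne
    obtain ⟨n, hlt, hle⟩ := exists_nat_pow_near_of_lt_one (ENNReal.toReal_pos hne hfin)
      (by simpa using ENNReal.toReal_mono ENNReal.one_ne_top hU) (inv_pos.2 hb0)
      (inv_lt_one_of_one_lt₀ hb)
    rw [inv_pow] at hlt hle
    have hcompare : ENNReal.ofReal (b ^ n)⁻¹ ≤ ENNReal.ofReal b * Metric.ediam U := by
      rw [← ENNReal.ofReal_toReal hfin, ← ENNReal.ofReal_mul hb0.le]
      rw [pow_succ', mul_inv, inv_mul_lt_iff₀ hb0] at hlt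
      exact ENNReal.ofReal_le_ofReal hlt.le
    calc ν U ≤ 3 * K * ENNReal.ofReal (b ^ n)⁻¹ ^ t :=
          hscale n ((ENNReal.le_ofReal_iff_toReal_le hfin (by positivity)).2 hle)
      _ ≤ 3 * K * (ENNReal.ofReal b * Metric.ediam U) ^ t := by gcongr
      _ = 3 * K * ENNReal.ofReal b ^ t * Metric.ediam U ^ t := by
          rw [ENNReal.mul_rpow_of_nonneg _ _ ht.le, ← mul_assoc]

theorem le_dimH_of_forall_exists_adicCell_le (hb : 1 < b) {s : Set ℝ} (hs : ν s ≠ 0) {t : ℝ≥0}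
    (hdecay : ∀ x ∈ s, ∃ K : ℕ, ∀ n,
      ν (adicCell b n x) ≤ K * ENNReal.ofReal (b ^ n)⁻¹ ^ (t : ℝ)) :
    t ≤ dimH s := by
  rcases eq_or_ne t 0 with rfl | ht
  · simp
  set A : ℕ → Set ℝ := fun K =>
    {x ∈ s | ∀ n, ν (adicCell b n x) ≤ K * ENNReal.ofReal (b ^ n)⁻¹ ^ (t : ℝ)}
  obtain ⟨K, hK⟩ : ∃ K, ν (A K) ≠ 0 := by
    by_contra! hnull
    refine hs (measure_mono_null (fun x hx => ?_) (measure_iUnion_null hnull))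
    obtain ⟨K, hxK⟩ := hdecay x hx
    exact mem_iUnion.2 ⟨K, hx, hxK⟩
  have hcell : ∀ n x, ν.restrict (A K) (adicCell b n x) ≤
      K * ENNReal.ofReal (b ^ n)⁻¹ ^ (t : ℝ) := by
    intro n x
    rw [Measure.restrict_apply (measurableSet_adicCell b n x)]
    rcases (adicCell b n x ∩ A K).eq_empty_or_nonempty with hempty | ⟨y, hyx, hyA⟩
    · simp [hempty]
    · exact (measure_mono inter_subset_left).trans (adicCell_eq_of_mem hyx ▸ hyA.2 n)
  have hmass : ν.restrict (A K) (A K) ≠ 0 := by rwa [Measure.restrict_apply_self]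
  refine (le_dimH_of_measure_le_ediam_rpow hmass ?_ one_pos fun U hU =>
    measure_le_ediam_rpow_of_adicCell_le hb (ENNReal.natCast_ne_top K)
      (NNReal.coe_pos.2 (pos_iff_ne_zero.2 ht)) hcell hU).trans (dimH_mono (sep_subset s _))
  exact ENNReal.mul_ne_top (ENNReal.mul_ne_top ENNReal.ofNat_ne_top (ENNReal.natCast_ne_top K))
    (ENNReal.rpow_ne_top_of_nonneg t.coe_nonneg ENNReal.ofReal_ne_top)

end adicCell

end HausdorffDimension

section CumulantGeneratingFunction

open scoped Topology
open ProbabilityTheory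

variable {ι : Type*} [MeasurableSpace ι] [MeasurableSingletonClass ι]

lemma mgf_count [Fintype ι] (f : ι → ℝ) (t : ℝ) : mgf f .count t = ∑ i, Real.exp (t * f i) :=
  integral_count _

variable [Finite ι] {f : ι → ℝ}

lemma exp_mul_le_mgf_count (f : ι → ℝ) (t : ℝ) (i : ι) :
    Real.exp (t * f i) ≤ mgf f .count t := by
  have := Fintype.ofFinite ι
  rw [mgf_count]
  exact Finset.single_le_sum (f := fun i => Real.exp (t * f i))
    (fun _ _ => (Real.exp_pos _).le) (Finset.mem_univ i)

lemma cgf_count_nonneg (hneg : ∃ i, f i ≤ 0) (hpos : ∃ i, 0 ≤ f i) (t : ℝ) :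
    0 ≤ cgf f .count t := by
  obtain ⟨i, hi⟩ : ∃ i, 0 ≤ t * f i := by
    rcases le_total 0 t with ht | ht
    · exact hpos.imp fun i hi => mul_nonneg ht hi
    · exact hneg.imp fun i hi => mul_nonneg_of_nonpos_of_nonpos ht hi
  exact Real.log_nonneg ((Real.one_le_exp hi).trans (exp_mul_le_mgf_count f t i))

/- Chernoff's bound: the left-hand side counts words `w` with `1 ≤ exp (n|t|δ + t ∑ f (w i))`, and
the sum of `exp (t ∑ f (w i))` over all words factorises. -/
lemma natCard_abs_sum_lt_le_exp (f : ι → ℝ) (n : ℕ) (δ t : ℝ) :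
    (Nat.card {w : Fin n → ι // |∑ i, f (w i)| < n * δ} : ℝ) ≤
      Real.exp (n * (cgf f .count t + |t| * δ)) := by
  classical
  have := Fintype.ofFinite ι
  have hword : ∀ w ∈ Finset.univ.filter fun w : Fin n → ι => |∑ i, f (w i)| < n * δ,
      1 ≤ Real.exp (|t| * (n * δ)) * Real.exp (t * ∑ i, f (w i)) := by
    intro w hw
    rw [← Real.exp_add, Real.one_le_exp_iff]
    have hsum := mul_le_mul_of_nonneg_left (Finset.mem_filter.1 hw).2.le (abs_nonneg t)
    rw [← abs_mul] at hsum
    linarith [neg_abs_le (t * ∑ i, f (w i))]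
  calc (Nat.card {w : Fin n → ι // |∑ i, f (w i)| < n * δ} : ℝ)
      = ∑ w : Fin n → ι with |∑ i, f (w i)| < n * δ, (1 : ℝ) := by
        rw [Nat.card_eq_fintype_card, Fintype.card_subtype, Finset.sum_const, nsmul_one]
    _ ≤ ∑ w : Fin n → ι with |∑ i, f (w i)| < n * δ,
          Real.exp (|t| * (n * δ)) * Real.exp (t * ∑ i, f (w i)) := Finset.sum_le_sum hword
    _ ≤ ∑ w : Fin n → ι, Real.exp (|t| * (n * δ)) * Real.exp (t * ∑ i, f (w i)) :=
        Finset.sum_le_univ_sum_of_nonneg fun _ => by positivity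
    _ = Real.exp (|t| * (n * δ)) * mgf f .count t ^ n := by
        simp_rw [mgf_count, Fintype.sum_pow, Finset.mul_sum, Real.exp_sum]
    _ ≤ Real.exp (|t| * (n * δ)) * Real.exp (cgf f .count t) ^ n := by
        gcongr
        · exact mgf_nonneg
        · exact Real.le_exp_log _
    _ = Real.exp (n * (cgf f .count t + |t| * δ)) := by
        rw [← Real.exp_nat_mul, ← Real.exp_add]
        ring_nf

lemma tendsto_cgf_count_atTop {j : ι} (hj : f j = 0) (hf : ∀ i ≠ j, f i < 0) :
    Tendsto (cgf f .count) atTop (𝓝 0) := by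
  classical
  have := Fintype.ofFinite ι
  have hterm : ∀ i, Tendsto (fun t => Real.exp (t * f i)) atTop (𝓝 (if i = j then 1 else 0)) := by
    intro i
    split_ifs with hi
    · simp [hi, hj]
    · exact Real.tendsto_exp_atBot.comp (tendsto_id.atTop_mul_const_of_neg (hf i hi))
  have hmgf : Tendsto (mgf f .count) atTop (𝓝 1) := by
    simpa [← mgf_count] using tendsto_finsetSum Finset.univ fun i _ => hterm i
  exact Real.log_one ▸ hmgf.log one_ne_zero

lemma tendsto_mgf_count_cocompact (hneg : ∃ i, f i < 0) (hpos : ∃ i, 0 < f i) :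
    Tendsto (mgf f .count) (cocompact ℝ) atTop := by
  obtain ⟨i, hi⟩ := hneg
  obtain ⟨j, hj⟩ := hpos
  rw [cocompact_eq_atBot_atTop, tendsto_sup]
  exact ⟨tendsto_atTop_mono (exp_mul_le_mgf_count f · i)
      (Real.tendsto_exp_atTop.comp (tendsto_id.atBot_mul_const_of_neg hi)),
    tendsto_atTop_mono (exp_mul_le_mgf_count f · j)
      (Real.tendsto_exp_atTop.comp (tendsto_id.atTop_mul_const hj))⟩

theorem exists_deriv_cgf_count_eq_zero (hneg : ∃ i, f i < 0) (hpos : ∃ i, 0 < f i) :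
    ∃ t, deriv (cgf f .count) t = 0 := by
  obtain ⟨t, ht⟩ := (continuous_mgf (X := f) (μ := .count) fun _ => .of_finite).exists_forall_le
    (tendsto_mgf_count_cocompact hneg hpos)
  obtain ⟨i, -⟩ := hneg
  have hmin : IsMinOn (cgf f .count) univ t := fun s _ =>
    Real.log_le_log ((Real.exp_pos _).trans_le (exp_mul_le_mgf_count f t i)) (ht s)
  exact ⟨t, (hmin.isLocalMin univ_mem).deriv_eq_zero⟩

end CumulantGeneratingFunction

section GibbsMeasure

open scoped Topology
open ProbabilityTheory

theorem ae_tendsto_average_infinitePi {Ω : Type*} [MeasurableSpace Ω] {P : Measure Ω}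
    [IsProbabilityMeasure P] {f : Ω → ℝ} (hf : Measurable f) (hf_int : Integrable f P) :
    ∀ᵐ ω ∂Measure.infinitePi fun _ : ℕ => P,
      Tendsto (fun n : ℕ => (∑ i ∈ Finset.range n, f (ω i)) / n) atTop (𝓝 (∫ x, f x ∂P)) := by
  have hlaw := measurePreserving_eval_infinitePi fun _ : ℕ => P
  have hident : ∀ i : ℕ, IdentDistrib (fun ω : ℕ → Ω => f (ω i)) (fun ω => f (ω 0))
      (Measure.infinitePi fun _ => P) (Measure.infinitePi fun _ => P) := fun i =>
    IdentDistrib.comp ⟨(hlaw i).aemeasurable, (hlaw 0).aemeasurable,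
      (hlaw i).map_eq.trans (hlaw 0).map_eq.symm⟩ hf
  have hindep : iIndepFun (fun (i : ℕ) (ω : ℕ → Ω) => f (ω i)) (Measure.infinitePi fun _ => P) :=
    iIndepFun_infinitePi (X := fun _ => f) fun _ => hf
  have hmean : ∫ ω, f (ω 0) ∂Measure.infinitePi (fun _ : ℕ => P) = ∫ x, f x ∂P :=
    (integral_map (hlaw 0).aemeasurable (by rw [(hlaw 0).map_eq]; exact hf_int.1)).symm.trans
      (by rw [(hlaw 0).map_eq])
  have hlln := strong_law_ae_real (fun (i : ℕ) (ω : ℕ → Ω) => f (ω i))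
    ((hlaw 0).integrable_comp_of_integrable hf_int) (fun i j hij => hindep.indepFun hij) hident
  rwa [hmean] at hlln

variable {ι : Type*} [Finite ι] [Nonempty ι] [MeasurableSpace ι] [MeasurableSingletonClass ι]

instance isProbabilityMeasure_tilted_count (f : ι → ℝ) :
    IsProbabilityMeasure (Measure.count.tilted f) :=
  isProbabilityMeasure_tilted .of_finite

/-- The law of a sequence of independent letters, each drawn with probability proportional to
`exp (t * f i)`. -/
def gibbsMeasure (f : ι → ℝ) (t : ℝ) : Measure (ℕ → ι) :=
  Measure.infinitePi fun _ => Measure.count.tilted (t * f ·)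

instance isProbabilityMeasure_gibbsMeasure (f : ι → ℝ) (t : ℝ) :
    IsProbabilityMeasure (gibbsMeasure f t) := by
  unfold gibbsMeasure
  infer_instance

lemma gibbsMeasure_cylinder (f : ι → ℝ) (t : ℝ) (ω : ℕ → ι) (n : ℕ) :
    gibbsMeasure f t {ω' | ∀ i < n, ω' i = ω i} =
      ENNReal.ofReal (Real.exp (t * ∑ i ∈ Finset.range n, f (ω i) - n * cgf f .count t)) := by
  have hletter : ∀ i, Measure.count.tilted (t * f ·) {i} =
      ENNReal.ofReal (Real.exp (t * f i - cgf f .count t)) := fun i => by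
    rw [tilted_mul_apply_cgf _ .of_finite, lintegral_singleton, Measure.count_singleton, mul_one]
  have hpi : {ω' : ℕ → ι | ∀ i < n, ω' i = ω i} = Set.pi (Finset.range n) fun i => {ω i} := by
    ext
    simp
  rw [hpi, gibbsMeasure, Measure.infinitePi_pi _ fun _ _ => measurableSet_singleton _]
  simp_rw [hletter]
  rw [← ENNReal.ofReal_prod_of_nonneg fun _ _ => (Real.exp_pos _).le, ← Real.exp_sum,
    Finset.sum_sub_distrib, ← Finset.mul_sum, Finset.sum_const, Finset.card_range, nsmul_eq_mul]

theorem ae_tendsto_average_gibbsMeasure (f : ι → ℝ) (t : ℝ) :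
    ∀ᵐ ω ∂gibbsMeasure f t, Tendsto (fun n : ℕ => (∑ i ∈ Finset.range n, f (ω i)) / n) atTop
      (𝓝 (deriv (cgf f .count) t)) := by
  have hexp : integrableExpSet f .count = univ := eq_univ_of_forall fun _ => .of_finite
  rw [← integral_tilted_mul_self (by simp [hexp])]
  exact ae_tendsto_average_infinitePi (measurable_of_countable f) .of_finite

lemma exists_exp_le_mul_inv_pow_rpow {a : ℕ → ℝ} {b c d : ℝ} (hb : 0 < b)
    (ha : Tendsto (fun n : ℕ => a n / n) atTop (𝓝 c)) (hc : c < -(d * Real.log b)) :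
    ∃ K : ℕ, ∀ n, Real.exp (a n) ≤ K * ((b ^ n)⁻¹) ^ d := by
  have hpow : ∀ n : ℕ, ((b ^ n)⁻¹) ^ d = Real.exp (-(n * (d * Real.log b))) := fun n => by
    rw [Real.rpow_def_of_pos (by positivity), Real.log_inv, Real.log_pow]
    ring_nf
  have hbdd : ∀ᶠ n : ℕ in atTop, Real.exp (a n + n * (d * Real.log b)) ≤ 1 := by
    filter_upwards [ha.eventually_lt_const hc, eventually_gt_atTop 0] with n hn hn0
    rw [div_lt_iff₀ (Nat.cast_pos.2 hn0)] at hn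
    rw [Real.exp_le_one_iff]
    linarith
  obtain ⟨B, hB⟩ := IsBoundedUnder.bddAbove_range ⟨1, eventually_map.2 hbdd⟩
  obtain ⟨K, hK⟩ := exists_nat_ge B
  refine ⟨K, fun n => ?_⟩
  rw [hpow, Real.exp_neg, ← div_eq_mul_inv, le_div_iff₀ (Real.exp_pos _), ← Real.exp_add]
  exact (hB ⟨n, rfl⟩).trans hK

theorem exists_gibbsMeasure_cylinder_le {f : ι → ℝ} {b c d t : ℝ} (hb : 0 < b)
    (hd : d * Real.log b < cgf f .count t - t * c) {ω : ℕ → ι}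
    (hω : Tendsto (fun n : ℕ => (∑ i ∈ Finset.range n, f (ω i)) / n) atTop (𝓝 c)) :
    ∃ K : ℕ, ∀ n, gibbsMeasure f t {ω' | ∀ i < n, ω' i = ω i} ≤
      K * ENNReal.ofReal (b ^ n)⁻¹ ^ d := by
  have hrate : Tendsto
      (fun n : ℕ => (t * ∑ i ∈ Finset.range n, f (ω i) - n * cgf f .count t) / n) atTop
      (𝓝 (t * c - cgf f .count t)) := by
    refine ((hω.const_mul t).sub_const _).congr' ?_
    filter_upwards [eventually_gt_atTop 0] with n hn
    field_simp
  obtain ⟨K, hK⟩ := exists_exp_le_mul_inv_pow_rpow (d := d) hb hrate (by linarith)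
  refine ⟨K, fun n => ?_⟩
  rw [gibbsMeasure_cylinder, ENNReal.ofReal_rpow_of_pos (by positivity),
    ← ENNReal.ofReal_natCast, ← ENNReal.ofReal_mul (Nat.cast_nonneg _)]
  exact ENNReal.ofReal_le_ofReal (hK n)

end GibbsMeasure

section NonterminatingDigits

variable {p : ℕ}

lemma padicDigit_nonneg (hp : 0 < p) (x : ℝ) (n : ℕ) : 0 ≤ padicDigit p x n := by
  have : (0 : ℝ) < p := Nat.cast_pos.2 hp
  have hceil : (p : ℤ) * (⌈x * (p : ℝ) ^ n⌉ - 1) < ⌈x * (p : ℝ) ^ (n + 1)⌉ := by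
    rw [Int.lt_ceil]
    push_cast
    rw [pow_succ]
    nlinarith [Int.ceil_lt_add_one (x * (p : ℝ) ^ n)]
  rw [padicDigit]
  omega

lemma padicDigit_lt (hp : 0 < p) (x : ℝ) (n : ℕ) : padicDigit p x n < p := by
  have : (0 : ℝ) < p := Nat.cast_pos.2 hp
  have hceil : ⌈x * (p : ℝ) ^ (n + 1)⌉ ≤ (p : ℤ) * ⌈x * (p : ℝ) ^ n⌉ := by
    rw [Int.ceil_le]
    push_cast
    rw [pow_succ]
    nlinarith [Int.le_ceil (x * (p : ℝ) ^ n)]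
  rw [padicDigit]
  linarith

lemma exists_padicDigit_eq (hp : 0 < p) (x : ℝ) (n : ℕ) :
    ∃ d : Fin p, padicDigit p x n = (d : ℕ) := by
  have hnonneg := padicDigit_nonneg hp x n
  have hlt := padicDigit_lt hp x n
  exact ⟨⟨(padicDigit p x n).toNat, by omega⟩, (Int.toNat_of_nonneg hnonneg).symm⟩

lemma ceil_mul_pow_succ_sub_one_ediv (hp : 0 < p) (x : ℝ) (n : ℕ) :
    (⌈x * (p : ℝ) ^ (n + 1)⌉ - 1) / p = ⌈x * (p : ℝ) ^ n⌉ - 1 := by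
  have hdigit : ⌈x * (p : ℝ) ^ (n + 1)⌉ - 1 =
      padicDigit p x n + p * (⌈x * (p : ℝ) ^ n⌉ - 1) := by
    rw [padicDigit]
    ring
  rw [hdigit, Int.add_mul_ediv_left _ _ (by omega),
    Int.ediv_eq_zero_of_lt (padicDigit_nonneg hp x n) (padicDigit_lt hp x n), zero_add]

lemma mem_adicCell_succ_iff (hp : 0 < p) {x y : ℝ} {n : ℕ} :
    y ∈ adicCell p (n + 1) x ↔ y ∈ adicCell p n x ∧ padicDigit p y n = padicDigit p x n := by
  simp only [mem_adicCell]
  constructor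
  · intro h
    have hn : ⌈y * (p : ℝ) ^ n⌉ = ⌈x * (p : ℝ) ^ n⌉ := by
      have hy := ceil_mul_pow_succ_sub_one_ediv hp y n
      rw [h, ceil_mul_pow_succ_sub_one_ediv hp x n] at hy
      omega
    exact ⟨hn, by rw [padicDigit, padicDigit, h, hn]⟩
  · rintro ⟨hn, hdigit⟩
    rw [padicDigit, padicDigit, hn] at hdigit
    omega

lemma ceil_eq_one_of_mem_Ioc {x : ℝ} (hx : x ∈ Ioc 0 1) : ⌈x⌉ = 1 := by
  simpa [Int.ceil_eq_iff] using hx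

theorem mem_adicCell_iff_padicDigit_eq (hp : 0 < p) {x y : ℝ} (hx : x ∈ Ioc 0 1)
    (hy : y ∈ Ioc 0 1) {n : ℕ} :
    y ∈ adicCell p n x ↔ ∀ i < n, padicDigit p y i = padicDigit p x i := by
  induction n with
  | zero => simp [mem_adicCell, ceil_eq_one_of_mem_Ioc hx, ceil_eq_one_of_mem_Ioc hy]
  | succ n ih => rw [mem_adicCell_succ_iff hp, ih, Nat.forall_lt_succ_right]

/-- The points of `(0, 1]` whose non-terminating `p`-adic expansion starts with the word `w`. -/
def digitCylinder (p n : ℕ) (w : Fin n → Fin p) : Set ℝ :=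
  {x ∈ Ioc 0 1 | ∀ i : Fin n, padicDigit p x i = (w i : ℕ)}

lemma ediam_digitCylinder_le (hp : 0 < p) (n : ℕ) (w : Fin n → Fin p) :
    Metric.ediam (digitCylinder p n w) ≤ ENNReal.ofReal ((p : ℝ) ^ n)⁻¹ :=
  Metric.ediam_le fun _ hx _ hy => (edist_le_ofReal (by positivity)).2 <|
    dist_le_of_mem_adicCell (Nat.cast_pos.2 hp) <|
      (mem_adicCell_iff_padicDigit_eq hp hy.1 hx.1).2 fun i hi =>
        (hx.2 ⟨i, hi⟩).trans (hy.2 ⟨i, hi⟩).symm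

lemma padicDigit_succ (p : ℕ) (x : ℝ) (n : ℕ) :
    padicDigit p x (n + 1) = padicDigit p (x * p) n := by
  simp only [padicDigit, pow_succ', mul_assoc]

lemma padicDigit_natCast_add (p k : ℕ) (x : ℝ) (n : ℕ) :
    padicDigit p (k + x) n = padicDigit p x n := by
  have hceil : ∀ m : ℕ, ⌈(k + x) * (p : ℝ) ^ m⌉ = k * (p : ℤ) ^ m + ⌈x * (p : ℝ) ^ m⌉ :=
    fun m => by
      rw [add_mul, ← Int.ceil_intCast_add]
      push_cast
      rfl
  rw [padicDigit, padicDigit, hceil, hceil]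
  ring

lemma ofDigits_mul (ω : ℕ → Fin p) :
    Real.ofDigits ω * p = (ω 0 : ℕ) + Real.ofDigits fun n => ω (n + 1) := by
  have hp : (p : ℝ) ≠ 0 := Nat.cast_ne_zero.2 (Fin.pos (ω 0)).ne'
  rw [Real.ofDigits_eq_sum_add_ofDigits ω 1, Finset.sum_range_one, Real.ofDigitsTerm]
  field_simp
  ring

lemma ofDigits_mem_Ioc {ω : ℕ → Fin p} (hω : ∃ᶠ n in atTop, (ω n : ℕ) ≠ 0) :
    Real.ofDigits ω ∈ Ioc 0 1 := by
  obtain ⟨m, hm⟩ := hω.exists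
  have : (0 : ℝ) < p := Nat.cast_pos.2 (Fin.pos (ω 0))
  have : (0 : ℝ) < (ω m : ℕ) := Nat.cast_pos.2 (Nat.pos_of_ne_zero hm)
  refine ⟨Real.summable_ofDigitsTerm.tsum_pos (fun _ => Real.ofDigitsTerm_nonneg) m ?_,
    Real.ofDigits_le_one ω⟩
  rw [Real.ofDigitsTerm]
  positivity

theorem padicDigit_ofDigits {ω : ℕ → Fin p} (hω : ∃ᶠ n in atTop, (ω n : ℕ) ≠ 0) (n : ℕ) :
    padicDigit p (Real.ofDigits ω) n = (ω n : ℕ) := by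
  have hshift : ∃ᶠ n in atTop, (ω (n + 1) : ℕ) ≠ 0 := by
    rwa [← map_add_atTop_eq_nat 1, frequently_map] at hω
  induction n generalizing ω with
  | zero =>
    rw [padicDigit, pow_zero, mul_one, zero_add, pow_one, ofDigits_mul, Int.ceil_natCast_add,
      ceil_eq_one_of_mem_Ioc (ofDigits_mem_Ioc hω),
      ceil_eq_one_of_mem_Ioc (ofDigits_mem_Ioc hshift)]
    ring
  | succ n ih =>
    rw [padicDigit_succ, ofDigits_mul, padicDigit_natCast_add]
    refine ih hshift ?_
    rwa [← map_add_atTop_eq_nat 1, frequently_map] at hshift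

theorem map_ofDigits_adicCell_le {μ : Measure (ℕ → Fin p)}
    (hμ : ∀ᵐ ω ∂μ, ∃ᶠ n in atTop, (ω n : ℕ) ≠ 0) {ω : ℕ → Fin p}
    (hω : ∃ᶠ n in atTop, (ω n : ℕ) ≠ 0) (n : ℕ) :
    μ.map Real.ofDigits (adicCell p n (Real.ofDigits ω)) ≤ μ {ω' | ∀ i < n, ω' i = ω i} := by
  rw [Measure.map_apply Real.continuous_ofDigits.measurable (measurableSet_adicCell _ _ _)]
  refine measure_mono_ae ?_
  filter_upwards [hμ] with ω' hω' hcell i hi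
  have hdigit := (mem_adicCell_iff_padicDigit_eq (Fin.pos (ω 0)) (ofDigits_mem_Ioc hω)
    (ofDigits_mem_Ioc hω')).1 hcell i hi
  rw [padicDigit_ofDigits hω, padicDigit_ofDigits hω'] at hdigit
  exact Fin.ext (Int.ofNat_inj.1 hdigit)

end NonterminatingDigits

section DigitMean

open scoped NNReal Topology
open ProbabilityTheory

variable {p n : ℕ} {α δ : ℝ}

/-- The deviation of a digit from `α`. Centering makes `α` the mean of a tilted digit exactly when
the cumulant generating function is stationary. -/
def centeredDigit (p : ℕ) (α : ℝ) (j : Fin p) : ℝ := (j : ℕ) - α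

/-- The words counted by `h(α, n, δ)`, expressed through centered digits. -/
abbrev MeanWord (p n : ℕ) (α δ : ℝ) : Type :=
  {w : Fin n → Fin p // |∑ i, centeredDigit p α (w i)| < n * δ}

lemma hcount_eq_natCard_meanWord (p n : ℕ) (α δ : ℝ) :
    hcount p n α δ = Nat.card (MeanWord p n α δ) := by
  refine Nat.card_congr (Equiv.subtypeEquivRight fun w => ?_)
  simp only [centeredDigit, Finset.sum_sub_distrib, Finset.sum_const, Finset.card_univ,
    Fintype.card_fin, nsmul_eq_mul, abs_lt]
  constructor <;> rintro ⟨hlow, hup⟩ <;> constructor <;> linarith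

/-- The quantity `log h(α, n, δ) / (n log p)` whose upper limit in `n` defines the entropy. -/
def entropyRate (p : ℕ) (α δ : ℝ) (n : ℕ) : ℝ :=
  Real.log (hcount p n α δ) / (n * Real.log p)

lemma entropyRate_nonneg (p : ℕ) (α δ : ℝ) (n : ℕ) : 0 ≤ entropyRate p α δ n :=
  div_nonneg (Real.log_natCast_nonneg _) (mul_nonneg n.cast_nonneg (Real.log_natCast_nonneg _))

lemma entropyRate_le_one (p : ℕ) (α δ : ℝ) (n : ℕ) : entropyRate p α δ n ≤ 1 := by
  have := Real.log_natCast_nonneg p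
  refine div_le_one_of_le₀ ?_ (by positivity)
  have hcard : hcount p n α δ ≤ p ^ n := by
    rw [hcount_eq_natCard_meanWord]
    simpa using Nat.card_le_card_of_injective (Subtype.val : MeanWord p n α δ → Fin n → Fin p)
      Subtype.val_injective
  rcases (hcount p n α δ).eq_zero_or_pos with hzero | hpos
  · rw [hzero, Nat.cast_zero, Real.log_zero]
    positivity
  · rw [← Real.log_pow]
    exact Real.log_le_log (Nat.cast_pos.2 hpos) (mod_cast hcard)

lemma isBoundedUnder_entropyRate (p : ℕ) (α δ : ℝ) :
    IsBoundedUnder (· ≤ ·) atTop (entropyRate p α δ) :=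
  isBoundedUnder_of ⟨1, entropyRate_le_one p α δ⟩

lemma entropy_le_limsup_entropyRate (p : ℕ) (α : ℝ) (hδ : 0 < δ) :
    entropy p α ≤ limsup (entropyRate p α δ) atTop := by
  refine ciInf_le (f := fun δ : {δ : ℝ // 0 < δ} => limsup (entropyRate p α δ) atTop)
    ⟨0, ?_⟩ ⟨δ, hδ⟩
  rintro _ ⟨δ, rfl⟩
  exact le_limsup_of_frequently_le (.of_forall (entropyRate_nonneg p α δ))
    (isBoundedUnder_entropyRate p α δ)

lemma cgf_centeredDigit_nonneg (hp : 0 < p) (hα : 0 ≤ α) (hα' : α ≤ p - 1) (t : ℝ) :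
    0 ≤ cgf (centeredDigit p α) .count t :=
  cgf_count_nonneg ⟨⟨0, hp⟩, by simpa [centeredDigit]⟩
    ⟨⟨p - 1, by omega⟩, by simpa [centeredDigit, Nat.cast_pred hp] using hα'⟩ t

lemma log_hcount_le (hp : 0 < p) (hα : 0 ≤ α) (hα' : α ≤ p - 1) (hδ : 0 ≤ δ) (n : ℕ) (t : ℝ) :
    Real.log (hcount p n α δ) ≤ n * (cgf (centeredDigit p α) .count t + |t| * δ) := by
  have hcgf := cgf_centeredDigit_nonneg hp hα hα' t
  rcases (hcount p n α δ).eq_zero_or_pos with hzero | hpos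
  · rw [hzero, Nat.cast_zero, Real.log_zero]
    positivity
  · rw [Real.log_le_iff_le_exp (Nat.cast_pos.2 hpos), hcount_eq_natCard_meanWord]
    exact natCard_abs_sum_lt_le_exp _ n δ t

theorem entropy_le_cgf_div_log (hp : 2 ≤ p) (hα : 0 ≤ α) (hα' : α ≤ p - 1) (t : ℝ) :
    entropy p α ≤ cgf (centeredDigit p α) .count t / Real.log p := by
  have hlogp : 0 < Real.log p := Real.log_pos (Nat.one_lt_cast.2 hp)
  have hbound : ∀ δ > 0,
      entropy p α ≤ (cgf (centeredDigit p α) .count t + |t| * δ) / Real.log p := by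
    intro δ hδ
    refine (entropy_le_limsup_entropyRate p α hδ).trans (limsup_le_of_le
      (isBoundedUnder_of ⟨0, entropyRate_nonneg p α δ⟩).isCoboundedUnder_le ?_)
    filter_upwards [eventually_gt_atTop 0] with n hn
    rw [entropyRate, ← div_div]
    gcongr
    rw [div_le_iff₀' (Nat.cast_pos.2 hn)]
    exact log_hcount_le (by omega) hα hα' hδ.le n t
  have hlim : Tendsto (fun δ => (cgf (centeredDigit p α) .count t + |t| * δ) / Real.log p)
      (𝓝[>] 0) (𝓝 ((cgf (centeredDigit p α) .count t + |t| * 0) / Real.log p)) :=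
    (Continuous.tendsto (by fun_prop) 0).mono_left nhdsWithin_le_nhds
  simpa using ge_of_tendsto hlim (eventually_mem_nhdsWithin.mono hbound)

lemma entropy_zero_nonpos (hp : 2 ≤ p) : entropy p 0 ≤ 0 := by
  have hpR : (2 : ℝ) ≤ p := Nat.ofNat_le_cast.2 hp
  have hcgf : Tendsto (cgf (-centeredDigit p 0) .count) atTop (𝓝 0) := by
    refine tendsto_cgf_count_atTop (j := ⟨0, by omega⟩) (by simp [centeredDigit]) fun i hi => ?_
    simpa [centeredDigit] using Nat.pos_of_ne_zero fun h => hi (Fin.ext h)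
  have hlim := hcgf.div_const (Real.log p)
  rw [zero_div] at hlim
  refine ge_of_tendsto' hlim fun t => ?_
  rw [cgf_neg]
  exact entropy_le_cgf_div_log hp le_rfl (by linarith) (-t)

lemma entropy_sub_one_nonpos (hp : 2 ≤ p) : entropy p (p - 1) ≤ 0 := by
  have hpR : (2 : ℝ) ≤ p := Nat.ofNat_le_cast.2 hp
  have hcgf : Tendsto (cgf (centeredDigit p (p - 1)) .count) atTop (𝓝 0) := by
    refine tendsto_cgf_count_atTop (j := ⟨p - 1, by omega⟩)
      (by simp [centeredDigit, Nat.cast_pred (show 0 < p by omega)]) fun i hi => ?_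
    have hlt : (i : ℕ) + 1 < p := by
      have := Fin.val_ne_of_ne hi
      grind
    have hltR : ((i : ℕ) : ℝ) + 1 < p := mod_cast hlt
    rw [centeredDigit]
    linarith
  have hlim := hcgf.div_const (Real.log p)
  rw [zero_div] at hlim
  exact ge_of_tendsto' hlim fun t => entropy_le_cgf_div_log hp (by linarith) le_rfl t

lemma exists_deriv_cgf_centeredDigit_eq_zero (hα : 0 < α) (hα' : α < p - 1) :
    ∃ t, deriv (cgf (centeredDigit p α) .count) t = 0 := by
  have hp : 0 < p := Nat.cast_pos.1 (show (0 : ℝ) < p by linarith)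
  exact exists_deriv_cgf_count_eq_zero ⟨⟨0, hp⟩, by simpa [centeredDigit]⟩
    ⟨⟨p - 1, by omega⟩, by simpa [centeredDigit, Nat.cast_pred hp] using hα'⟩

lemma mem_iUnion_digitCylinder (hp : 0 < p) {x : ℝ} (hx : x ∈ Ioc 0 1) (hn : 0 < n)
    (hmean : |(msum p x 0 n : ℝ) / n - α| < δ) :
    x ∈ ⋃ w : MeanWord p n α δ, digitCylinder p n w := by
  choose d hd using exists_padicDigit_eq hp x
  have hnR : (0 : ℝ) < n := Nat.cast_pos.2 hn
  have hsum : ∑ i : Fin n, centeredDigit p α (d i) = n * ((msum p x 0 n : ℝ) / n - α) := by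
    rw [Fin.sum_univ_eq_sum_range (fun i => centeredDigit p α (d i)), mul_sub,
      mul_div_cancel₀ _ hnR.ne']
    simp [centeredDigit, msum, hd]
  refine mem_iUnion.2 ⟨⟨fun i => d i, ?_⟩, hx, fun i => hd i⟩
  rw [hsum, abs_mul, abs_of_pos hnR]
  gcongr

lemma dimH_setOf_abs_average_sub_lt_le (hp : 2 ≤ p) (α δ : ℝ) (N : ℕ) :
    dimH {x ∈ Ioc 0 1 | ∀ n ≥ N, |(msum p x 0 n : ℝ) / n - α| < δ} ≤
      ENNReal.ofReal (limsup (entropyRate p α δ) atTop) := by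
  have hrate : entropyRate p α δ = fun n : ℕ =>
      Real.log (Nat.card (MeanWord p n α δ)) / (n * Real.log p) := by
    simp only [← hcount_eq_natCard_meanWord]
    rfl
  rw [hrate]
  refine dimH_le_limsup_log_natCard_div (Nat.one_lt_cast.2 hp)
    (fun n w => ediam_digitCylinder_le (by omega) n w.1) ?_
    (hrate ▸ isBoundedUnder_entropyRate p α δ)
  filter_upwards [eventually_ge_atTop N, eventually_gt_atTop 0] with n hN hn x hx
  exact mem_iUnion_digitCylinder (by omega) hx.1 hn (hx.2 n hN)

theorem dimH_digitMeanLevelSet_le (hp : 2 ≤ p) (α : ℝ) :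
    dimH (digitMeanLevelSet p α) ≤ ENNReal.ofReal (entropy p α) := by
  have : Nonempty {δ : ℝ // 0 < δ} := ⟨⟨1, one_pos⟩⟩
  rw [entropy, ENNReal.ofReal_iInf]
  refine le_iInf fun ⟨δ, hδ⟩ => ?_
  have hcover : digitMeanLevelSet p α ⊆
      {0} ∪ ⋃ N : ℕ, {x ∈ Ioc 0 1 | ∀ n ≥ N, |(msum p x 0 n : ℝ) / n - α| < δ} := by
    rintro x ⟨hx, hlim⟩
    rcases hx.1.eq_or_lt with hzero | hpos
    · exact .inl hzero.symm
    · obtain ⟨N, hN⟩ := Metric.tendsto_atTop.1 hlim δ hδ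
      exact .inr (mem_iUnion.2 ⟨N, ⟨hpos, hx.2⟩, hN⟩)
  refine (dimH_mono hcover).trans ?_
  rw [dimH_union, dimH_singleton, dimH_iUnion]
  exact max_le bot_le (iSup_le fun N => dimH_setOf_abs_average_sub_lt_le hp α δ N)

/-- The digit sequences with arithmetic mean `α`. -/
def meanSequences (p : ℕ) (α : ℝ) : Set (ℕ → Fin p) :=
  {ω | Tendsto (fun n : ℕ => (∑ i ∈ Finset.range n, centeredDigit p α (ω i)) / n) atTop (𝓝 0)}

lemma mem_meanSequences {ω : ℕ → Fin p} : ω ∈ meanSequences p α ↔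
    Tendsto (fun n : ℕ => (∑ i ∈ Finset.range n, centeredDigit p α (ω i)) / n) atTop (𝓝 0) :=
  Iff.rfl

lemma frequently_ne_zero_of_mem_meanSequences (hα : α ≠ 0) {ω : ℕ → Fin p}
    (hω : ω ∈ meanSequences p α) : ∃ᶠ n in atTop, (ω n : ℕ) ≠ 0 := by
  intro hzero
  have hdigit : Tendsto (fun n => centeredDigit p α (ω n)) atTop (𝓝 (-α)) := by
    refine tendsto_const_nhds.congr' (hzero.mono fun n hn => ?_)
    simp [centeredDigit, not_not.1 hn]
  refine hα (neg_eq_zero.1 (tendsto_nhds_unique hdigit.cesaro ?_))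
  simpa only [div_eq_inv_mul, mem_meanSequences] using hω

lemma ofDigits_mem_digitMeanLevelSet (hα : α ≠ 0) {ω : ℕ → Fin p} (hω : ω ∈ meanSequences p α) :
    Real.ofDigits ω ∈ digitMeanLevelSet p α := by
  refine ⟨⟨Real.ofDigits_nonneg ω, Real.ofDigits_le_one ω⟩, ?_⟩
  have hmean := (mem_meanSequences.1 hω).add_const α
  rw [zero_add] at hmean
  refine hmean.congr' ?_
  filter_upwards [eventually_gt_atTop 0] with n hn
  simp only [msum, centeredDigit, zero_add,
    padicDigit_ofDigits (frequently_ne_zero_of_mem_meanSequences hα hω), Finset.sum_sub_distrib,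
    Finset.sum_const, Finset.card_range, nsmul_eq_mul]
  push_cast
  field_simp
  ring

theorem cgf_div_log_le_dimH (hp : 2 ≤ p) (hα : α ≠ 0) {t : ℝ}
    (ht : deriv (cgf (centeredDigit p α) .count) t = 0) :
    ENNReal.ofReal (cgf (centeredDigit p α) .count t / Real.log p) ≤
      dimH (digitMeanLevelSet p α) := by
  have : Nonempty (Fin p) := ⟨⟨0, by omega⟩⟩
  have hp1 : (1 : ℝ) < p := Nat.one_lt_cast.2 hp
  set μ := gibbsMeasure (centeredDigit p α) t
  have hmean : ∀ᵐ ω ∂μ, ω ∈ meanSequences p α := by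
    simpa only [ht, mem_meanSequences] using ae_tendsto_average_gibbsMeasure (centeredDigit p α) t
  have hmass : μ.map Real.ofDigits (Real.ofDigits '' meanSequences p α) ≠ 0 := by
    refine ne_bot_of_le_ne_bot ?_ ((measure_mono (subset_preimage_image _ _)).trans
      (Measure.le_map_apply Real.continuous_ofDigits.measurable.aemeasurable _))
    intro hnull
    obtain ⟨ω, hω, hω'⟩ := (hmean.and (measure_eq_zero_iff_ae_notMem.1 hnull)).exists
    exact hω' hω
  refine ENNReal.le_of_forall_nnreal_lt fun d hd => ?_
  have hd' : d * Real.log p < cgf (centeredDigit p α) .count t - t * 0 := by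
    rw [← ENNReal.ofReal_coe_nnreal, ENNReal.ofReal_lt_ofReal_iff',
      lt_div_iff₀ (Real.log_pos hp1)] at hd
    simpa using hd.1
  refine (le_dimH_of_forall_exists_adicCell_le hp1 hmass ?_).trans
    (dimH_mono (image_subset_iff.2 fun ω hω => ofDigits_mem_digitMeanLevelSet hα hω))
  rintro _ ⟨ω, hω, rfl⟩
  obtain ⟨K, hK⟩ := exists_gibbsMeasure_cylinder_le (zero_lt_one.trans hp1) hd' hω
  exact ⟨K, fun n => (map_ofDigits_adicCell_le
    (hmean.mono fun _ => frequently_ne_zero_of_mem_meanSequences hα)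
    (frequently_ne_zero_of_mem_meanSequences hα hω) n).trans (hK n)⟩

end DigitMean

/-- For an integer `p ≥ 2` and `0 ≤ α ≤ p-1`, `dim_H E(α) = h(α)`. -/
theorem dimH_digitMeanLevelSet (p : ℕ) (hp : 2 ≤ p) (α : ℝ)
    (hα : 0 ≤ α) (hα' : α ≤ (p : ℝ) - 1) :
    dimH (digitMeanLevelSet p α) = ENNReal.ofReal (entropy p α) := by
  refine le_antisymm (dimH_digitMeanLevelSet_le hp α) ?_
  rcases hα.eq_or_lt with rfl | hpos
  · simp [ENNReal.ofReal_of_nonpos (entropy_zero_nonpos hp)]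
  rcases hα'.eq_or_lt with rfl | hlt
  · simp [ENNReal.ofReal_of_nonpos (entropy_sub_one_nonpos hp)]
  obtain ⟨t, ht⟩ := exists_deriv_cgf_centeredDigit_eq_zero hpos hlt
  exact (ENNReal.ofReal_le_ofReal (entropy_le_cgf_div_log hp hα hα' t)).trans
    (cgf_div_log_le_dimH hp hpos.ne' ht)
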